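/- Let N ≥ 2 be an integer, K, κ, δ, α, m real constants and n > 0, with γ = (2N−2)/N and θ = (2N−3)/N, and let A > 0 stand for α(N). Let Z > 0 and let f : [0,Z) → ℝ be continuously differentiable with f > 0 and f(0) = α > 0, satisfying for all z ∈ (0,Z) the ordinary differential equation γK·f(z)^{γ−2}·f'(z) − mκθN·f(z)^{θ−2}·f'(z) + (δA/z^{N−1})·∫₀^z f(s)s^{N−1} ds = 0. Define a(t) = mt + n, ρ(t,r) = f(r/a(t))/a(t)^N and V(t,r) = (m/a(t))·r. Then for every t with a(t) > 0 and every r with 0 < r < a(t)·Z, the pair (ρ, V) satisfies both the radial mass equation ρ_t + Vρ_r + ρV_r + ((N−1)/r)ρV = 0 and the radial momentum equation ρ(V_t + V V_r) + ∂_r(Kρ^γ) + δρ·(A/r^{N−1})·∫₀^r ρ(t,s)s^{N−1} ds = κ∂_r(ρ^θ)·(((N−1)/r)V + V_r) + κρ^θ·(V_rr + ((N−1)/r)V_r − ((N−1)/r²)V). -/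

import Mathlib

/-!
For a homologous flow `V = (a'/a) r` the density `f (r / a) / a ^ N` is transported exactly,
whatever the profile `f`, so the mass equation is automatic. The velocity is linear in `r`, hence
its diffusion vanishes and the viscous force is `N (a'/a) ∂ᵣ(κ ρ ^ θ)`. At fixed `z = r / a` the
pressure gradient scales like `a ^ (-(N γ + 1))`, the viscous force like `a' a ^ (-(N θ + 2))` and
the self-force like `a ^ (-(2 N - 1))`. The exponents `γ = (2N-2)/N` and `θ = (2N-3)/N` are the ones
for which these powers of `a` agree. The momentum equation divided by `f z / a ^ (2 N - 1)` is then
the profile equation plus the inertial term `a'' a ^ (N - 1) z`, which vanishes for affine `a`.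
-/

open Set

/-- The radial continuity equation in dimension `N` for the density `ρ t r` and the radial velocity
`V t r`, at the point `(t, r)`. -/
def RadialMassEquation (N : ℕ) (ρ V : ℝ → ℝ → ℝ) (t r : ℝ) : Prop :=
  deriv (fun τ ↦ ρ τ r) t + V t r * deriv (ρ t) r + ρ t r * deriv (V t) r
    + ((N : ℝ) - 1) / r * (ρ t r * V t r) = 0

/-- The radial momentum equation of the Navier-Stokes-Poisson system without background at the
point `(t, r)`, with pressure `K ρ ^ γ` and viscosity `κ ρ ^ θ`; the potential is eliminated through
its radial derivative `A / r ^ (N - 1) * ∫₀ʳ ρ s ^ (N - 1) ds`. -/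
def RadialMomentumEquation (N : ℕ) (K κ δ A γ θ : ℝ) (ρ V : ℝ → ℝ → ℝ) (t r : ℝ) : Prop :=
  ρ t r * (deriv (fun τ ↦ V τ r) t + V t r * deriv (V t) r)
      + deriv (fun s ↦ K * ρ t s ^ γ) r
      + δ * ρ t r * (A / r ^ (N - 1)) * ∫ s in (0 : ℝ)..r, ρ t s * s ^ (N - 1)
    = κ * deriv (fun s ↦ ρ t s ^ θ) r * (((N : ℝ) - 1) / r * V t r + deriv (V t) r)
      + κ * ρ t r ^ θ
        * (deriv (deriv (V t)) r + ((N : ℝ) - 1) / r * deriv (V t) r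
          - ((N : ℝ) - 1) / r ^ 2 * V t r)

/-- The density with profile `f` dilated by the scale factor `a t` at constant total mass. -/
noncomputable def selfSimilarDensity (N : ℕ) (f a : ℝ → ℝ) (t r : ℝ) : ℝ :=
  f (r / a t) / a t ^ N

/-- The velocity field of the homologous flow `r = a t * z`; the function `a'` stands for the
derivative of the scale factor `a`. -/
noncomputable def homologousVelocity (a a' : ℝ → ℝ) (t r : ℝ) : ℝ :=
  a' t / a t * r

/-- The left-hand side of the ordinary differential equation for the profile `f` of a flow whose
scale factor grows at the rate `m`. -/
noncomputable def profileResidual (N : ℕ) (K κ δ A γ θ m : ℝ) (f : ℝ → ℝ) (z : ℝ) : ℝ :=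
  γ * K * f z ^ (γ - 2) * deriv f z - m * κ * θ * (N : ℝ) * f z ^ (θ - 2) * deriv f z
    + (δ * A / z ^ (N - 1)) * ∫ s in (0 : ℝ)..z, f s * s ^ (N - 1)

section HomologousFlow

variable {N : ℕ} {f a a' : ℝ → ℝ} {f' m c t r : ℝ}

section Velocity

lemma hasDerivAt_homologousVelocity_radius (a a' : ℝ → ℝ) (t r : ℝ) :
    HasDerivAt (homologousVelocity a a' t) (a' t / a t) r :=
  hasDerivAt_const_mul (a' t / a t)

lemma deriv_homologousVelocity_radius (a a' : ℝ → ℝ) (t : ℝ) :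
    deriv (homologousVelocity a a' t) = fun _ ↦ a' t / a t :=
  funext fun r ↦ (hasDerivAt_homologousVelocity_radius a a' t r).deriv

lemma hasDerivAt_homologousVelocity_time (r : ℝ) (ha : HasDerivAt a (a' t) t)
    (ha' : HasDerivAt a' c t) (hat : a t ≠ 0) :
    HasDerivAt (fun τ ↦ homologousVelocity a a' τ r) ((c / a t - (a' t / a t) ^ 2) * r) t := by
  refine ((ha'.div ha hat).mul_const r).congr_deriv ?_
  field_simp

lemma materialAcceleration_homologousVelocity (r : ℝ) (ha : HasDerivAt a (a' t) t)
    (ha' : HasDerivAt a' c t) (hat : a t ≠ 0) :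
    deriv (fun τ ↦ homologousVelocity a a' τ r) t
      + homologousVelocity a a' t r * deriv (homologousVelocity a a' t) r = c / a t * r := by
  rw [(hasDerivAt_homologousVelocity_time r ha ha' hat).deriv, deriv_homologousVelocity_radius,
    homologousVelocity]
  ring

lemma divergence_homologousVelocity (N : ℕ) (a a' : ℝ → ℝ) (t : ℝ) (hr : r ≠ 0) :
    ((N : ℝ) - 1) / r * homologousVelocity a a' t r + deriv (homologousVelocity a a' t) r
      = N * (a' t / a t) := by
  rw [deriv_homologousVelocity_radius, homologousVelocity]
  field_simp
  ring

lemma vectorLaplacian_homologousVelocity (N : ℕ) (a a' : ℝ → ℝ) (t r : ℝ) :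
    deriv (deriv (homologousVelocity a a' t)) r
      + ((N : ℝ) - 1) / r * deriv (homologousVelocity a a' t) r
      - ((N : ℝ) - 1) / r ^ 2 * homologousVelocity a a' t r = 0 := by
  simp only [deriv_homologousVelocity_radius, deriv_const, homologousVelocity]
  field_simp
  ring

end Velocity

section Density

lemma hasDerivAt_selfSimilarDensity_radius (N : ℕ) (hf : HasDerivAt f f' (r / a t)) :
    HasDerivAt (selfSimilarDensity N f a t) (f' / a t ^ (N + 1)) r := by
  have hz : HasDerivAt (fun s ↦ s / a t) (1 / a t) r := (hasDerivAt_id r).div_const (a t)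
  refine ((hf.comp r hz).div_const (a t ^ N)).congr_deriv ?_
  ring

lemma hasDerivAt_selfSimilarDensity_time (N : ℕ) (hf : HasDerivAt f f' (r / a t))
    (ha : HasDerivAt a m t) (hat : a t ≠ 0) :
    HasDerivAt (fun τ ↦ selfSimilarDensity N f a τ r)
      (-(m / a t ^ (N + 1)) * (f' * (r / a t) + N * f (r / a t))) t := by
  have hz : HasDerivAt (fun τ ↦ r / a τ) (-(m * r) / a t ^ 2) t :=
    ((hasDerivAt_const t r).div ha hat).congr_deriv (by ring)
  refine ((hf.comp t hz).div (ha.pow N) (pow_ne_zero N hat)).congr_deriv ?_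
  cases N with
  | zero => simp [field]
  | succ M =>
    simp only [Function.comp_apply, Pi.pow_apply, Nat.add_sub_cancel]
    field_simp
    ring

lemma hasDerivAt_selfSimilarDensity_rpow (N : ℕ) (hf : HasDerivAt f f' (r / a t))
    (hfpos : 0 < f (r / a t)) (hat : 0 < a t) (e : ℝ) :
    HasDerivAt (fun s ↦ selfSimilarDensity N f a t s ^ e)
      (e * f (r / a t) ^ (e - 1) * f' / a t ^ (N * e + 1)) r := by
  have hρpos : 0 < selfSimilarDensity N f a t r := div_pos hfpos (pow_pos hat N)
  have hρpow : selfSimilarDensity N f a t r ^ (e - 1)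
      = f (r / a t) ^ (e - 1) / a t ^ (N * (e - 1)) := by
    rw [selfSimilarDensity, Real.div_rpow hfpos.le (by positivity), Real.rpow_natCast_mul hat.le]
  have hscale : a t ^ (N * e + 1) = a t ^ (N + 1) * a t ^ (N * (e - 1)) := by
    rw [← Real.rpow_natCast, ← Real.rpow_add hat]
    push_cast
    ring_nf
  refine ((hasDerivAt_selfSimilarDensity_radius N hf).rpow_const (Or.inl hρpos.ne')).congr_deriv ?_
  rw [hρpow, hscale]
  ring

lemma integral_selfSimilarDensity_mul_pow (f : ℝ → ℝ) (hN : N ≠ 0) (hat : a t ≠ 0) (r : ℝ) :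
    ∫ s in (0 : ℝ)..r, selfSimilarDensity N f a t s * s ^ (N - 1)
      = ∫ z in (0 : ℝ)..r / a t, f z * z ^ (N - 1) := by
  have hintegrand (s : ℝ) : selfSimilarDensity N f a t s * s ^ (N - 1)
      = (a t)⁻¹ * (f (s / a t) * (s / a t) ^ (N - 1)) := by
    rw [selfSimilarDensity, ← mul_pow_sub_one hN, div_pow]
    ring
  simp only [hintegrand, intervalIntegral.integral_const_mul]
  rw [intervalIntegral.integral_comp_div (fun z ↦ f z * z ^ (N - 1)) hat, zero_div, smul_eq_mul,
    inv_mul_cancel_left₀ hat]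

end Density

theorem radialMassEquation_selfSimilar (N : ℕ) (hf : DifferentiableAt ℝ f (r / a t))
    (ha : HasDerivAt a (a' t) t) (hat : a t ≠ 0) (hr : r ≠ 0) :
    RadialMassEquation N (selfSimilarDensity N f a) (homologousVelocity a a') t r := by
  rw [RadialMassEquation, (hasDerivAt_selfSimilarDensity_time N hf.hasDerivAt ha hat).deriv,
    (hasDerivAt_selfSimilarDensity_radius N hf.hasDerivAt).deriv, deriv_homologousVelocity_radius,
    homologousVelocity, selfSimilarDensity]
  field_simp
  ring

theorem radialMomentumEquation_selfSimilar_iff (K κ δ A γ θ : ℝ) (hN : N ≠ 0)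
    (hf : DifferentiableAt ℝ f (r / a t)) (hfpos : 0 < f (r / a t))
    (ha : HasDerivAt a (a' t) t) (ha' : HasDerivAt a' c t) (hat : 0 < a t) (hr : r ≠ 0) :
    RadialMomentumEquation N K κ δ A γ θ (selfSimilarDensity N f a) (homologousVelocity a a') t r ↔
      f (r / a t) / a t ^ N * (c / a t * r)
          + K * (γ * f (r / a t) ^ (γ - 1) * deriv f (r / a t) / a t ^ (N * γ + 1))
          + δ * (f (r / a t) / a t ^ N) * (A / r ^ (N - 1))
            * ∫ z in (0 : ℝ)..r / a t, f z * z ^ (N - 1)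
        = κ * (θ * f (r / a t) ^ (θ - 1) * deriv f (r / a t) / a t ^ (N * θ + 1))
          * (N * (a' t / a t)) := by
  have hpow := hasDerivAt_selfSimilarDensity_rpow N hf.hasDerivAt hfpos hat
  rw [RadialMomentumEquation, materialAcceleration_homologousVelocity r ha ha' hat.ne',
    ((hpow γ).const_mul K).deriv, (hpow θ).deriv, integral_selfSimilarDensity_mul_pow f hN hat.ne',
    divergence_homologousVelocity N a a' t hr, vectorLaplacian_homologousVelocity, mul_zero,
    add_zero, selfSimilarDensity]

theorem radialMomentumEquation_selfSimilar_iff_profileResidual {γ θ : ℝ} (K κ δ A : ℝ)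
    (hγ : N * γ = 2 * N - 2) (hθ : N * θ = 2 * N - 3)
    (hf : DifferentiableAt ℝ f (r / a t)) (hfpos : 0 < f (r / a t))
    (ha : HasDerivAt a (a' t) t) (ha' : HasDerivAt a' c t) (hat : 0 < a t) (hr : r ≠ 0) :
    RadialMomentumEquation N K κ δ A γ θ (selfSimilarDensity N f a) (homologousVelocity a a') t r ↔
      profileResidual N K κ δ A γ θ (a' t) f (r / a t) + c * a t ^ (N - 1) * (r / a t) = 0 := by
  obtain ⟨M, rfl⟩ : ∃ M, N = M + 1 :=
    Nat.exists_eq_succ_of_ne_zero (by rintro rfl; norm_num at hγ)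
  have hpressure : a t ^ (((M + 1 : ℕ) : ℝ) * γ + 1) = a t ^ (2 * M + 1) := by
    rw [hγ, ← Real.rpow_natCast]
    push_cast
    ring_nf
  have hviscosity : a t ^ (((M + 1 : ℕ) : ℝ) * θ + 1) = a t ^ (2 * M) := by
    rw [hθ, ← Real.rpow_natCast]
    push_cast
    ring_nf
  have hprofile (e : ℝ) : f (r / a t) ^ (e - 1) = f (r / a t) * f (r / a t) ^ (e - 2) := by
    rw [show e - 1 = 1 + (e - 2) by ring, Real.rpow_add hfpos, Real.rpow_one]
  have hfactor : f (r / a t) / a t ^ (2 * M + 1) ≠ 0 := (div_pos hfpos (pow_pos hat _)).ne'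
  rw [radialMomentumEquation_selfSimilar_iff K κ δ A γ θ M.add_one_ne_zero hf hfpos ha ha' hat hr,
    hpressure, hviscosity, hprofile, hprofile, ← sub_eq_zero]
  refine Iff.trans (Eq.congr ?_ rfl) (mul_eq_zero_iff_left hfactor)
  rw [profileResidual, Nat.add_sub_cancel, div_pow]
  field_simp
  ring

end HomologousFlow

theorem stmt_6_general (N : ℕ) (hN : N ≠ 0) (K κ δ A γ θ Z : ℝ)
    (hγ : γ = (2 * (N : ℝ) - 2) / N) (hθ : θ = (2 * (N : ℝ) - 3) / N)
    (f : ℝ → ℝ) (hf : DifferentiableOn ℝ f (Ico 0 Z)) (hfpos : ∀ z ∈ Ioo 0 Z, 0 < f z)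
    (a a' : ℝ → ℝ) (ρ V : ℝ → ℝ → ℝ) (hρ : ∀ t r, ρ t r = f (r / a t) / a t ^ N)
    (hV : ∀ t r, V t r = a' t / a t * r) {c t r : ℝ} (ha : HasDerivAt a (a' t) t)
    (ha' : HasDerivAt a' c t) (hat : 0 < a t) (hr : 0 < r) (hrZ : r < a t * Z) :
    RadialMassEquation N ρ V t r ∧
      (RadialMomentumEquation N K κ δ A γ θ ρ V t r ↔
        profileResidual N K κ δ A γ θ (a' t) f (r / a t) + c * a t ^ (N - 1) * (r / a t) = 0) := by
  obtain rfl : ρ = selfSimilarDensity N f a := funext₂ hρ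
  obtain rfl : V = homologousVelocity a a' := funext₂ hV
  have hz : r / a t ∈ Ioo 0 Z := ⟨div_pos hr hat, (div_lt_iff₀' hat).2 hrZ⟩
  have hfz : DifferentiableAt ℝ f (r / a t) := hf.differentiableAt (Ico_mem_nhds hz.1 hz.2)
  have hNγ : N * γ = 2 * N - 2 := by rw [hγ, mul_div_cancel₀ _ (Nat.cast_ne_zero.2 hN)]
  have hNθ : N * θ = 2 * N - 3 := by rw [hθ, mul_div_cancel₀ _ (Nat.cast_ne_zero.2 hN)]
  exact ⟨radialMassEquation_selfSimilar N hfz ha hat.ne' hr.ne',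
    radialMomentumEquation_selfSimilar_iff_profileResidual K κ δ A hNγ hNθ hfz (hfpos _ hz)
      ha ha' hat hr.ne'⟩

/-- Theorem 1 (1a): with Λ = 0, γ = (2N−2)/N, θ = (2N−3)/N and a(t) = mt + n, the
separable pair ρ(t,r) = f(r/a(t))/a(t)^N, V(t,r) = (m/a(t))·r solves the radial
mass and momentum equations of the Navier-Stokes-Poisson system, provided f solves
the stated ordinary differential equation. -/
theorem stmt_6 (N : ℕ) (hN : 2 ≤ N) (K κ δ α m n A γ θ Z : ℝ)
    (hn : 0 < n) (hA : 0 < A) (hZ : 0 < Z) (hα : 0 < α)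
    (hγ : γ = (2 * (N : ℝ) - 2) / N) (hθ : θ = (2 * (N : ℝ) - 3) / N)
    (f : ℝ → ℝ) (hf : ContDiffOn ℝ 1 f (Set.Ico 0 Z))
    (hfpos : ∀ z ∈ Set.Ico (0:ℝ) Z, 0 < f z) (hf0 : f 0 = α)
    (hode : ∀ z ∈ Set.Ioo (0:ℝ) Z,
      γ * K * f z ^ (γ - 2) * deriv f z
        - m * κ * θ * (N : ℝ) * f z ^ (θ - 2) * deriv f z
        + (δ * A / z ^ (N - 1)) * ∫ s in (0:ℝ)..z, f s * s ^ (N - 1) = 0)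
    (a : ℝ → ℝ) (ha : ∀ t, a t = m * t + n)
    (ρ V : ℝ → ℝ → ℝ)
    (hρ : ∀ t r, ρ t r = f (r / a t) / (a t) ^ N)
    (hV : ∀ t r, V t r = (m / a t) * r) :
    ∀ t : ℝ, 0 < a t → ∀ r : ℝ, 0 < r → r < a t * Z →
      (deriv (fun τ => ρ τ r) t + V t r * deriv (fun s => ρ t s) r
          + ρ t r * deriv (fun s => V t s) r
          + ((N : ℝ) - 1) / r * (ρ t r * V t r) = 0)
      ∧ (ρ t r * (deriv (fun τ => V τ r) t + V t r * deriv (fun s => V t s) r)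
          + deriv (fun s => K * ρ t s ^ γ) r
          + δ * ρ t r * (A / r ^ (N - 1)) * ∫ s in (0:ℝ)..r, ρ t s * s ^ (N - 1)
        = κ * deriv (fun s => ρ t s ^ θ) r
              * (((N : ℝ) - 1) / r * V t r + deriv (fun s => V t s) r)
          + κ * ρ t r ^ θ
              * (deriv (deriv (fun s => V t s)) r
                + ((N : ℝ) - 1) / r * deriv (fun s => V t s) r
                - ((N : ℝ) - 1) / r ^ 2 * V t r)) := by
  intro t ht r hr hrZ
  have ha_deriv : HasDerivAt a m t := funext ha ▸ (hasDerivAt_const_mul m).add_const n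
  exact (stmt_6_general N (by positivity) K κ δ A γ θ Z hγ hθ f (hf.differentiableOn one_ne_zero)
    (fun z hz ↦ hfpos z (Ioo_subset_Ico_self hz)) a (fun _ ↦ m) ρ V hρ hV ha_deriv
    (hasDerivAt_const t m) ht hr hrZ).imp_right fun h ↦ h.2 <| by
      simpa [profileResidual] using hode _ ⟨div_pos hr ht, (div_lt_iff₀' ht).2 hrZ⟩
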